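/- arXiv:2104.02169 — 2 statements merged into one kernel-verified Lean document; each statement's English description precedes it below -/
import Mathlib

section
/- Emergence of the Euler nonlinearity from kinetic moments: let u : U → ℝ³ be differentiable at x ∈ U ⊂ ℝ³ with (∇·u)(x) = 0. Then for each i = 1,2,3, (1/2) Σ_{j=1}^3 ∂_{x_j} [ ∫_{ℝ³} (u(x)·v)² ( v_i v_j − (1/3) δ_{ij} |v|² ) μ(v) dv ] = (u·∇u)_i(x) − (1/3) ∂_{x_i} ( |u(x)|² ). -/
open MeasureTheory Real
open scoped RealInnerProductSpace

noncomputable section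

/-- The global Maxwellian `μ(v) = (2π)^{−3/2} e^{−|v|²/2}`. -/
def globalMaxwellian (v : EuclideanSpace ℝ (Fin 3)) : ℝ :=
  (2 * Real.pi) ^ (-(3 : ℝ) / 2) * Real.exp (-‖v‖ ^ 2 / 2)

lemma gI (k : ℕ) : Integrable (fun t : ℝ => t ^ k * Real.exp (-t ^ 2 / 2)) := by
  have h := integrable_rpow_mul_exp_neg_mul_sq (b := 1 / 2) (by norm_num) (s := (k : ℝ))
    (by have : (0 : ℝ) ≤ k := k.cast_nonneg
        linarith)
  refine h.congr (Filter.Eventually.of_forall fun t => ?_)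
  simp only [Real.rpow_natCast]
  congr 2
  ring

lemma gD (t : ℝ) : HasDerivAt (fun t : ℝ => Real.exp (-t ^ 2 / 2)) (-(t * Real.exp (-t ^ 2 / 2))) t := by
  have h : HasDerivAt (fun t : ℝ => -t ^ 2 / 2) (-t) t := by
    convert! ((hasDerivAt_pow 2 t).neg.div_const 2) using 1
    simp
    ring
  convert! h.exp using 1
  ring

lemma gm0 : ∫ t : ℝ, t ^ 0 * Real.exp (-t ^ 2 / 2) = √(2 * π) := by
  have h := integral_gaussian (1 / 2)
  rw [show π / (1 / 2) = 2 * π by ring] at h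
  rw [← h]
  congr 1
  ext t
  rw [pow_zero, one_mul]
  congr 1
  ring

lemma gm1 : ∫ t : ℝ, t ^ 1 * Real.exp (-t ^ 2 / 2) = 0 := by
  have h := integral_eq_zero_of_hasDerivAt_of_integrable (fun t => gD t)
    (by simpa using (gI 1).neg) (by simpa using gI 0)
  rw [integral_neg, neg_eq_zero] at h
  simpa using h

lemma gms (k : ℕ) : ∫ t : ℝ, t ^ (k + 2) * Real.exp (-t ^ 2 / 2) =
    (k + 1) * ∫ t : ℝ, t ^ k * Real.exp (-t ^ 2 / 2) := by
  have hi := ((gI k).const_mul ((k : ℝ) + 1)).sub (gI (k + 2))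
  have h := integral_eq_zero_of_hasDerivAt_of_integrable
    (f := fun t : ℝ => t ^ (k + 1) * Real.exp (-t ^ 2 / 2))
    (f' := fun t : ℝ => ((k : ℝ) + 1) * (t ^ k * Real.exp (-t ^ 2 / 2))
      - t ^ (k + 2) * Real.exp (-t ^ 2 / 2))
    (fun t => by
      convert! (hasDerivAt_pow (k + 1) t).mul (gD t) using 1
      push_cast
      ring) hi (gI (k + 1))
  rw [integral_sub ((gI k).const_mul _) (gI (k + 2)), integral_const_mul] at h
  linarith

/-- Normalised one-dimensional moments. -/
def mom : ℕ → ℕ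
  | 0 => 1
  | 1 => 0
  | k + 2 => (k + 1) * mom k

lemma gmom : ∀ k : ℕ, ∫ t : ℝ, t ^ k * Real.exp (-t ^ 2 / 2) = mom k * √(2 * π)
  | 0 => by rw [gm0]; simp [mom]
  | 1 => by rw [gm1]; simp [mom]
  | k + 2 => by
    rw [gms, gmom k, mom]
    push_cast
    ring

lemma const_eq : (2 * π) ^ (-(3 : ℝ) / 2) * √(2 * π) ^ 3 = 1 := by
  have h : (0 : ℝ) < 2 * π := by positivity
  rw [Real.sqrt_eq_rpow, ← Real.rpow_natCast, ← Real.rpow_mul h.le, ← Real.rpow_add h]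
  norm_num

lemma mono_eq (n : Fin 3 → ℕ) (v : EuclideanSpace ℝ (Fin 3)) :
    (∏ m, v m ^ n m) * globalMaxwellian v =
      (2 * π) ^ (-(3 : ℝ) / 2) * ∏ m, (v m ^ n m * Real.exp (-(v m) ^ 2 / 2)) := by
  rw [globalMaxwellian, EuclideanSpace.norm_sq_eq, Finset.prod_mul_distrib, ← Real.exp_sum]
  simp only [Real.norm_eq_abs, sq_abs, Fin.sum_univ_three]
  rw [show -(v 0 ^ 2 + v 1 ^ 2 + v 2 ^ 2) / 2 = -v 0 ^ 2 / 2 + -v 1 ^ 2 / 2 + -v 2 ^ 2 / 2 by ring]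
  ring

lemma mono_int (n : Fin 3 → ℕ) : Integrable (fun v : EuclideanSpace ℝ (Fin 3) =>
    (∏ m, v m ^ n m) * globalMaxwellian v) := by
  simp_rw [mono_eq]
  refine Integrable.const_mul ?_ _
  rw [← (PiLp.volume_preserving_toLp (Fin 3)).integrable_comp_emb
    (MeasurableEquiv.toLp 2 (Fin 3 → ℝ)).measurableEmbedding]
  exact Integrable.fintype_prod (f := fun m (t : ℝ) => t ^ n m * Real.exp (-t ^ 2 / 2))
    (fun m => gI (n m))

lemma mono_val (n : Fin 3 → ℕ) : ∫ v : EuclideanSpace ℝ (Fin 3),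
    (∏ m, v m ^ n m) * globalMaxwellian v = ((∏ m, mom (n m) : ℕ) : ℝ) := by
  simp_rw [mono_eq]
  rw [integral_const_mul, ← (PiLp.volume_preserving_toLp (Fin 3)).integral_comp
    (MeasurableEquiv.toLp 2 (Fin 3 → ℝ)).measurableEmbedding]
  have := integral_fintype_prod_volume_eq_prod
    (f := fun (m : Fin 3) (t : ℝ) => t ^ n m * Real.exp (-t ^ 2 / 2))
  simp only [] at this ⊢
  rw [this]
  simp_rw [gmom]
  rw [Finset.prod_mul_distrib, Finset.prod_const, Finset.card_univ, Fintype.card_fin,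
    mul_left_comm, const_eq]
  push_cast
  ring

/-- Exponents of the monomial `v_a v_b v_k v_l`. -/
def cnt (a b k l m : Fin 3) : ℕ :=
  (if a = m then 1 else 0) + (if b = m then 1 else 0) + (if k = m then 1 else 0)
    + (if l = m then 1 else 0)

lemma cnt_prod (a b k l : Fin 3) (v : EuclideanSpace ℝ (Fin 3)) :
    ∏ m, v m ^ cnt a b k l m = v a * v b * v k * v l := by
  simp only [cnt, pow_add, Finset.prod_mul_distrib, Finset.prod_pow_boole, Finset.mem_univ, if_true]

/-- Kronecker delta. -/
def dl (a b : Fin 3) : ℕ := if a = b then 1 else 0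

lemma wick : ∀ a b k l : Fin 3, ∏ m, mom (cnt a b k l m) =
    dl a b * dl k l + dl a k * dl b l + dl a l * dl b k := by
  decide +kernel

lemma four_int (a b k l : Fin 3) : Integrable (fun v : EuclideanSpace ℝ (Fin 3) =>
    v a * v b * v k * v l * globalMaxwellian v) := by
  simpa only [cnt_prod] using mono_int (cnt a b k l)

lemma four_val (a b k l : Fin 3) : ∫ v : EuclideanSpace ℝ (Fin 3),
    v a * v b * v k * v l * globalMaxwellian v =
      ((dl a b * dl k l + dl a k * dl b l + dl a l * dl b k : ℕ) : ℝ) := by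
  rw [← wick]
  simpa only [cnt_prod] using mono_val (cnt a b k l)

lemma quad_int (w : EuclideanSpace ℝ (Fin 3)) (k l : Fin 3) :
    Integrable (fun v : EuclideanSpace ℝ (Fin 3) =>
      ∑ a, ∑ b, w a * w b * (v a * v b * v k * v l * globalMaxwellian v)) :=
  integrable_finsetSum _ fun a _ => integrable_finsetSum _ fun b _ =>
    (four_int a b k l).const_mul _

lemma quad_val (w : EuclideanSpace ℝ (Fin 3)) (k l : Fin 3) :
    ∫ v : EuclideanSpace ℝ (Fin 3),
      ∑ a, ∑ b, w a * w b * (v a * v b * v k * v l * globalMaxwellian v) =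
    ∑ a, ∑ b, w a * w b * ((dl a b * dl k l + dl a k * dl b l + dl a l * dl b k : ℕ) : ℝ) := by
  rw [integral_finsetSum _ fun a _ => integrable_finsetSum _ fun b _ =>
    (four_int a b k l).const_mul _]
  refine Finset.sum_congr rfl fun a _ => ?_
  rw [integral_finsetSum _ fun b _ => (four_int a b k l).const_mul _]
  refine Finset.sum_congr rfl fun b _ => ?_
  rw [integral_const_mul, four_val]

lemma quad_val' (w : EuclideanSpace ℝ (Fin 3)) (k l : Fin 3) :
    ∫ v : EuclideanSpace ℝ (Fin 3),
      ∑ a, ∑ b, w a * w b * (v a * v b * v k * v l * globalMaxwellian v) =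
    (if k = l then 1 else 0) * ∑ a, w a ^ 2 + 2 * w k * w l := by
  rw [quad_val]
  fin_cases k <;> fin_cases l <;> simp [Fin.sum_univ_three, dl] <;> ring

lemma moment (w : EuclideanSpace ℝ (Fin 3)) (i j : Fin 3) :
    ∫ v : EuclideanSpace ℝ (Fin 3), ⟪w, v⟫ ^ 2 *
        (v i * v j - (1 / 3) * (if i = j then (1 : ℝ) else 0) * ‖v‖ ^ 2) * globalMaxwellian v =
      2 * (w i * w j) - 2 / 3 * (if i = j then (1 : ℝ) else 0) * ‖w‖ ^ 2 := by
  have h : ∀ v : EuclideanSpace ℝ (Fin 3), ⟪w, v⟫ ^ 2 *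
        (v i * v j - (1 / 3) * (if i = j then (1 : ℝ) else 0) * ‖v‖ ^ 2) * globalMaxwellian v =
      (∑ a, ∑ b, w a * w b * (v a * v b * v i * v j * globalMaxwellian v)) -
      ((1 / 3) * (if i = j then (1 : ℝ) else 0)) * ∑ c,
        ∑ a, ∑ b, w a * w b * (v a * v b * v c * v c * globalMaxwellian v) := by
    intro v
    simp only [PiLp.inner_apply, EuclideanSpace.norm_sq_eq, Real.norm_eq_abs, sq_abs,
      Fin.sum_univ_three, RCLike.inner_apply, conj_trivial]
    ring
  simp_rw [h]
  rw [integral_sub (quad_int w i j)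
    ((integrable_finsetSum _ fun c _ => quad_int w c c).const_mul _), integral_const_mul,
    integral_finsetSum _ fun c _ => quad_int w c c]
  simp_rw [quad_val', EuclideanSpace.norm_sq_eq, Real.norm_eq_abs, sq_abs]
  simp only [Fin.sum_univ_three, if_true]
  ring

/-- Emergence of the Euler nonlinearity from kinetic moments: if `u` is differentiable at
`x` with `(∇·u)(x) = 0`, then for each `i`,
`(1/2) Σ_j ∂_{x_j} [ ∫ (u(x)·v)² ( v_i v_j − (1/3) δ_{ij} |v|² ) μ(v) dv ]
  = (u·∇u)_i(x) − (1/3) ∂_{x_i} |u(x)|²`. -/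
theorem euler_nonlinearity_from_moments
    (u : EuclideanSpace ℝ (Fin 3) → EuclideanSpace ℝ (Fin 3))
    (U : Set (EuclideanSpace ℝ (Fin 3))) (hU : IsOpen U)
    (x : EuclideanSpace ℝ (Fin 3)) (hx : x ∈ U)
    (hu : DifferentiableAt ℝ u x)
    (hdiv : ∑ j : Fin 3, fderiv ℝ u x (EuclideanSpace.single j 1) j = 0)
    (i : Fin 3) :
    (1 / 2) * ∑ j : Fin 3,
        fderiv ℝ
          (fun y => ∫ v : EuclideanSpace ℝ (Fin 3),
            ⟪u y, v⟫ ^ 2 *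
              (v i * v j - (1 / 3) * (if i = j then (1 : ℝ) else 0) * ‖v‖ ^ 2) *
              globalMaxwellian v)
          x (EuclideanSpace.single j 1) =
      (∑ j : Fin 3, u x j * fderiv ℝ (fun y => u y i) x (EuclideanSpace.single j 1)) -
        (1 / 3) * fderiv ℝ (fun y => ‖u y‖ ^ 2) x (EuclideanSpace.single i 1) := by
  simp_rw [moment]
  have hc : ∀ k : Fin 3, HasFDerivAt (fun y => u y k)
      ((EuclideanSpace.proj k : EuclideanSpace ℝ (Fin 3) →L[ℝ] ℝ).comp (fderiv ℝ u x)) x :=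
    fun k => (EuclideanSpace.proj k : EuclideanSpace ℝ (Fin 3) →L[ℝ] ℝ).hasFDerivAt.comp x
      hu.hasFDerivAt
  have hn : HasFDerivAt (fun y => ‖u y‖ ^ 2) (fderiv ℝ (fun y => ‖u y‖ ^ 2) x) x :=
    (hu.norm_sq ℝ).hasFDerivAt
  have hj : ∀ j : Fin 3, fderiv ℝ (fun y => 2 * (u y i * u y j) -
      2 / 3 * (if i = j then (1 : ℝ) else 0) * ‖u y‖ ^ 2) x (EuclideanSpace.single j 1) =
      2 * (u x i * fderiv ℝ u x (EuclideanSpace.single j 1) j +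
        u x j * fderiv ℝ u x (EuclideanSpace.single j 1) i) -
      2 / 3 * (if i = j then (1 : ℝ) else 0) *
        fderiv ℝ (fun y => ‖u y‖ ^ 2) x (EuclideanSpace.single j 1) := by
    intro j
    have hd := ((((hc i).mul (hc j)).const_mul 2).sub
      (hn.const_mul (2 / 3 * (if i = j then (1 : ℝ) else 0)))).fderiv
    exact congrArg (fun L => L (EuclideanSpace.single j 1)) hd
  simp_rw [hj, (hc i).fderiv]
  rw [Finset.sum_sub_distrib, ← Finset.mul_sum, Finset.sum_add_distrib, ← Finset.mul_sum, hdiv]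
  simp only [mul_ite, ite_mul, mul_one, mul_zero, zero_mul, Finset.sum_ite_eq, Finset.mem_univ,
    if_true, zero_add]
  have : ∀ j : Fin 3, ((EuclideanSpace.proj i : EuclideanSpace ℝ (Fin 3) →L[ℝ] ℝ).comp
    (fderiv ℝ u x)) (EuclideanSpace.single j 1) = fderiv ℝ u x (EuclideanSpace.single j 1) i :=
    fun j => rfl
  simp_rw [this]
  ring
end
end

section
/- Quantitative convergence of the heat flow of the Navier–Stokes–Fourier system to the transported heat of the Euler system: let Ω = 𝕋² × (0,∞) with 𝕋 = ℝ/2πℤ, let T > 0, κ > 0, η_c > 0, and let u, u_E : [0,T] × Ω̄ → ℝ³ and θ, θ_E : [0,T] × Ω̄ → ℝ be C¹ in t and C² in x, such that these functions and their first and second spatial derivatives are bounded by C e^{−c x₃} uniformly in t for some C, c > 0. Assume: (i) ∇·u = 0 in Ω and u = 0 on ∂Ω; (ii) ∂_t θ + u·∇θ − κη_c Δθ = 0 in Ω and θ = 0 on ∂Ω; (iii) ∂_t θ_E + u_E·∇θ_E = 0 in Ω and θ_E = 0 on ∂Ω; (iv) θ(0,·) = θ_E(0,·); (v) sup_{0≤t≤T}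 ‖∇θ_E(t)‖_{L^∞(Ω)} ≤ M and sup_{0≤t≤T} ‖Δθ_E(t)‖_{L²(Ω)} ≤ M. Then there is a constant C′ depending only on M and η_c such that sup_{0≤t≤T} ‖(θ − θ_E)(t)‖²_{L²(Ω)} ≤ C′ e^{C′ T} ( ∫₀^T ‖(u − u_E)(t)‖²_{L²(Ω)} dt + κ² T ). In particular, if ∫₀^T ‖u − u_E‖²_{L²(Ω)} dt → 0 as κ → 0, then sup_{0≤t≤T} ‖θ − θ_E‖_{L²(Ω)} → 0 as κ → 0. -/
open MeasureTheory Real Set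

noncomputable section

/-- The spatial domain `Ω = 𝕋² × (0,∞)`, modeled as the box `(0,2π)² × (0,∞) ⊂ ℝ³`
(functions on `Ω` are modeled as functions on `ℝ³` that are `2π`-periodic in `x₁, x₂`). -/
def channel : Set (EuclideanSpace ℝ (Fin 3)) :=
  {x | x 0 ∈ Ioo 0 (2 * Real.pi) ∧ x 1 ∈ Ioo 0 (2 * Real.pi) ∧ 0 < x 2}

/-- The closed half-space `{x₃ ≥ 0}`, modeling `Ω̄ = 𝕋² × [0,∞)`. -/
def upperHalfSpace : Set (EuclideanSpace ℝ (Fin 3)) := {x | 0 ≤ x 2}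

/-- `2π`-periodicity in the two horizontal variables. -/
def HorizontallyPeriodic {α : Type*} (f : EuclideanSpace ℝ (Fin 3) → α) : Prop :=
  (∀ x, f (x + (2 * Real.pi) • EuclideanSpace.single 0 (1 : ℝ)) = f x) ∧
  (∀ x, f (x + (2 * Real.pi) • EuclideanSpace.single 1 (1 : ℝ)) = f x)

/-- `C¹` in `t` and `C²` in `x` on `[0,T] × Ω̄`. -/
def RegC1C2 {F : Type*} [NormedAddCommGroup F] [NormedSpace ℝ F] (T : ℝ)
    (f : ℝ → EuclideanSpace ℝ (Fin 3) → F) : Prop :=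
  ContDiffOn ℝ 1 (fun p : ℝ × EuclideanSpace ℝ (Fin 3) => f p.1 p.2)
      (Icc 0 T ×ˢ upperHalfSpace) ∧
  ∀ t ∈ Icc (0 : ℝ) T, ContDiffOn ℝ 2 (f t) upperHalfSpace

/-- `f`, `∇f`, `∇²f` are bounded by `C e^{−c x₃}`, uniformly in `t ∈ [0,T]`. -/
def DecaysExp {F : Type*} [NormedAddCommGroup F] [NormedSpace ℝ F] (T C c : ℝ)
    (f : ℝ → EuclideanSpace ℝ (Fin 3) → F) : Prop :=
  ∀ t ∈ Icc (0 : ℝ) T, ∀ x : EuclideanSpace ℝ (Fin 3), 0 < x 2 →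
    ‖f t x‖ ≤ C * Real.exp (-c * x 2) ∧
    ‖fderiv ℝ (f t) x‖ ≤ C * Real.exp (-c * x 2) ∧
    ‖iteratedFDeriv ℝ 2 (f t) x‖ ≤ C * Real.exp (-c * x 2)

/-- The divergence `∇·f = Σᵢ ∂ᵢfᵢ`. -/
def div3 (f : EuclideanSpace ℝ (Fin 3) → EuclideanSpace ℝ (Fin 3))
    (x : EuclideanSpace ℝ (Fin 3)) : ℝ :=
  ∑ i : Fin 3, fderiv ℝ f x (EuclideanSpace.single i 1) i

/-- The Laplacian `Δf = Σᵢ ∂ᵢ²f`. -/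
def lap3 (f : EuclideanSpace ℝ (Fin 3) → ℝ) (x : EuclideanSpace ℝ (Fin 3)) : ℝ :=
  ∑ i : Fin 3,
    fderiv ℝ (fun y => fderiv ℝ f y (EuclideanSpace.single i 1)) x (EuclideanSpace.single i 1)

/-- Shorthand for the ambient space. -/
abbrev E3 := EuclideanSpace ℝ (Fin 3)

/-- The sides of the channel. -/
def side : Fin 3 → Set ℝ := ![Ioo 0 (2 * Real.pi), Ioo 0 (2 * Real.pi), Ioi 0]

lemma mem_channel_iff (x : E3) : x ∈ channel ↔ ∀ i, x i ∈ side i := by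
  simp [channel, side, Fin.forall_fin_succ]

lemma channel_pos {x : E3} (hx : x ∈ channel) : 0 < x 2 := hx.2.2

lemma measurableSet_side (i : Fin 3) : MeasurableSet (side i) := by
  fin_cases i
  · exact measurableSet_Ioo
  · exact measurableSet_Ioo
  · exact measurableSet_Ioi

lemma channel_eq_preimage :
    channel = (WithLp.ofLp : E3 → (Fin 3 → ℝ)) ⁻¹' (Set.univ.pi side) := by
  ext x
  simp [mem_channel_iff]

lemma measurableSet_channel : MeasurableSet channel := by
  rw [channel_eq_preimage]
  exact (PiLp.volume_preserving_ofLp (Fin 3)).measurable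
    (MeasurableSet.univ_pi measurableSet_side)

lemma measurableEmbedding_ofLp :
    MeasurableEmbedding (WithLp.ofLp : E3 → (Fin 3 → ℝ)) :=
  (MeasurableEquiv.toLp 2 (Fin 3 → ℝ)).symm.measurableEmbedding

lemma integrableOn_exp {c : ℝ} (hc : 0 < c) :
    IntegrableOn (fun x : E3 => Real.exp (-c * x 2)) channel := by
  rw [channel_eq_preimage]
  have key : IntegrableOn (fun y : Fin 3 → ℝ => Real.exp (-c * y 2)) (Set.univ.pi side) := by
    unfold IntegrableOn
    rw [volume_pi, Measure.restrict_pi_pi]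
    have := Integrable.fintype_prod (𝕜 := ℝ) (ι := Fin 3)
      (f := ![fun _ => 1, fun _ => 1, fun s => Real.exp (-c * s)])
      (μ := fun i => (volume : Measure ℝ).restrict (side i)) (by
        intro i
        fin_cases i
        · simp [side]
        · simp [side]
        · exact exp_neg_integrableOn_Ioi 0 hc)
    simpa [Fin.prod_univ_three] using this
  exact ((PiLp.volume_preserving_ofLp (Fin 3)).integrableOn_comp_preimage
    measurableEmbedding_ofLp).2 key

lemma bdd_int {c K : ℝ} (hc : 0 < c) {f : E3 → ℝ}
    (hm : AEStronglyMeasurable f (volume.restrict channel))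
    (hb : ∀ x : E3, 0 < x 2 → ‖f x‖ ≤ K * Real.exp (-c * x 2)) : IntegrableOn f channel := by
  refine Integrable.mono' ((integrableOn_exp hc).const_mul K) hm ?_
  filter_upwards [ae_restrict_mem measurableSet_channel] with x hx
  exact hb x (channel_pos hx)

lemma fubini_zero (i : Fin 3) (f : E3 → ℝ) (hf : IntegrableOn f channel)
    (h : ∀ x ∈ channel, ∫ s in side i, f (x + (s - x i) • EuclideanSpace.single i 1) = 0) :
    ∫ x in channel, f x = 0 := by
  set Φ := (MeasurableEquiv.toLp 2 (Fin 3 → ℝ)).symm.trans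
    (MeasurableEquiv.piFinSuccAbove (fun _ : Fin 3 => ℝ) i) with hΦ
  have hmp : MeasurePreserving Φ volume volume :=
    (EuclideanSpace.volume_preserving_symm_measurableEquiv_toLp (Fin 3)).trans
      (volume_preserving_piFinSuccAbove (fun _ : Fin 3 => ℝ) i)
  have hmp' := hmp.symm
  have hsymm : ∀ s y, Φ.symm (s, y) = WithLp.toLp 2 (i.insertNth (α := fun _ => ℝ) s y) :=
    fun s y => rfl
  have hpre : Φ.symm ⁻¹' channel = side i ×ˢ (Set.univ.pi fun j => side (i.succAbove j)) := by
    ext ⟨s, y⟩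
    simp only [Set.mem_preimage, mem_channel_iff, Set.mem_prod, Set.mem_univ_pi]
    rw [Fin.forall_iff_succAbove i]
    simp [hsymm]
  rw [← hmp'.setIntegral_preimage_emb Φ.symm.measurableEmbedding, hpre]
  have hint : IntegrableOn (fun z => f (Φ.symm z))
      (side i ×ˢ (Set.univ.pi fun j => side (i.succAbove j))) := by
    rw [← hpre]
    exact (hmp'.integrableOn_comp_preimage Φ.symm.measurableEmbedding).2 hf
  have hmeas : MeasurableSet (Set.univ.pi fun j => side (i.succAbove j)) :=
    MeasurableSet.univ_pi fun j => measurableSet_side _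
  rw [Measure.volume_eq_prod] at hint ⊢
  rw [← setIntegral_prod_swap]
  refine (setIntegral_prod (fun z : (Fin 2 → ℝ) × ℝ => f (Φ.symm z.swap)) hint.swap).trans ?_
  apply setIntegral_eq_zero_of_forall_eq_zero
  intro y hy
  have hne : ∃ s0, s0 ∈ side i := by
    fin_cases i
    · exact ⟨Real.pi, by simp [side, Real.pi_pos]⟩
    · exact ⟨Real.pi, by simp [side, Real.pi_pos]⟩
    · exact ⟨1, by simp [side]⟩
  obtain ⟨s0, hs0⟩ := hne
  have hx : Φ.symm (s0, y) ∈ channel := by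
    have : (s0, y) ∈ Φ.symm ⁻¹' channel := by
      rw [hpre]; exact ⟨hs0, hy⟩
    exact this
  rw [← h _ hx]
  congr 1
  ext s
  congr 1
  ext j
  simp only [Prod.swap]
  rcases Fin.eq_self_or_eq_succAbove i j with rfl | ⟨k, rfl⟩
  · simp [hsymm]
  · simp [hsymm, Fin.succAbove_ne]

lemma line_hasDerivAt (g : E3 → ℝ) (x : E3) (i : Fin 3) (s : ℝ)
    (hg : DifferentiableAt ℝ g (x + (s - x i) • EuclideanSpace.single i 1)) :
    HasDerivAt (fun r : ℝ => g (x + (r - x i) • EuclideanSpace.single i 1))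
      (fderiv ℝ g (x + (s - x i) • EuclideanSpace.single i 1) (EuclideanSpace.single i 1)) s := by
  have h1 : HasDerivAt (fun r : ℝ => x + (r - x i) • (EuclideanSpace.single i 1 : E3))
      (EuclideanSpace.single i 1) s := by
    have := (((hasDerivAt_id s).sub_const (x i)).smul_const
      (EuclideanSpace.single i 1 : E3)).const_add x
    simpa using this
  exact hg.hasFDerivAt.comp_hasDerivAt s h1

lemma line_measurable (x : E3) (i : Fin 3) :
    Measurable (fun r : ℝ => x + (r - x i) • (EuclideanSpace.single i 1 : E3)) := by
  have : Continuous (fun r : ℝ => x + (r - x i) • (EuclideanSpace.single i 1 : E3)) := by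
    fun_prop
  exact this.measurable

lemma div_h {c K : ℝ} (hc : 0 < c) (i : Fin 3) (hi : i ≠ 2) (g : E3 → ℝ)
    (hd : ∀ x : E3, 0 < x 2 → DifferentiableAt ℝ g x)
    (hb : ∀ x : E3, 0 < x 2 →
      ‖fderiv ℝ g x (EuclideanSpace.single i 1)‖ ≤ K * Real.exp (-c * x 2))
    (hp : HorizontallyPeriodic g) :
    IntegrableOn (fun x => fderiv ℝ g x (EuclideanSpace.single i 1)) channel ∧
      ∫ x in channel, fderiv ℝ g x (EuclideanSpace.single i 1) = 0 := by
  have hm := measurable_fderiv_apply_const ℝ g (EuclideanSpace.single i 1 : E3)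
  have hI : IntegrableOn (fun x => fderiv ℝ g x (EuclideanSpace.single i 1)) channel :=
    bdd_int hc hm.aestronglyMeasurable hb
  refine ⟨hI, fubini_zero i _ hI ?_⟩
  intro x hx
  have hx2 := channel_pos hx
  have hside : side i = Ioo 0 (2 * Real.pi) := by
    fin_cases i
    · rfl
    · rfl
    · exact absurd rfl hi
  have h2 : ∀ s : ℝ, (x + (s - x i) • (EuclideanSpace.single i 1 : E3)) 2 = x 2 := by
    intro s
    simp [hi.symm]
  rw [hside, ← integral_Ioc_eq_integral_Ioo,
    ← intervalIntegral.integral_of_le (by positivity),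
    intervalIntegral.integral_eq_sub_of_hasDerivAt
      (f := fun r : ℝ => g (x + (r - x i) • EuclideanSpace.single i 1))]
  · have hper : ∀ z, g (z + (2 * Real.pi) • EuclideanSpace.single i (1 : ℝ)) = g z := by
      fin_cases i
      · exact hp.1
      · exact hp.2
      · exact absurd rfl hi
    rw [sub_eq_zero, ← hper (x + (0 - x i) • EuclideanSpace.single i 1)]
    congr 1
    module
  · intro s _
    apply line_hasDerivAt
    apply hd
    rw [h2]; exact hx2
  · have : IntervalIntegrable (fun _ : ℝ => K * Real.exp (-c * x 2)) volume 0 (2 * Real.pi) :=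
      intervalIntegrable_const
    refine this.mono_fun' (hm.comp (line_measurable x i)).aestronglyMeasurable ?_
    refine Filter.Eventually.of_forall fun s => ?_
    have := hb (x + (s - x i) • (EuclideanSpace.single i 1 : E3)) (by rw [h2]; exact hx2)
    rw [h2] at this
    exact this

lemma div_v {c K : ℝ} (hc : 0 < c) (g : E3 → ℝ)
    (hd : ∀ x : E3, 0 < x 2 → DifferentiableAt ℝ g x)
    (hb : ∀ x : E3, 0 < x 2 →
      ‖fderiv ℝ g x (EuclideanSpace.single 2 1)‖ ≤ K * Real.exp (-c * x 2))
    (hb0 : ∀ x : E3, 0 < x 2 → ‖g x‖ ≤ K * Real.exp (-c * x 2))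
    (h0 : ∀ x : E3, x 2 = 0 → g x = 0)
    (hcont : ∀ x : E3, x 2 = 0 → ContinuousWithinAt g upperHalfSpace x) :
    IntegrableOn (fun x => fderiv ℝ g x (EuclideanSpace.single 2 1)) channel ∧
      ∫ x in channel, fderiv ℝ g x (EuclideanSpace.single 2 1) = 0 := by
  have hm := measurable_fderiv_apply_const ℝ g (EuclideanSpace.single 2 1 : E3)
  have hI : IntegrableOn (fun x => fderiv ℝ g x (EuclideanSpace.single 2 1)) channel :=
    bdd_int hc hm.aestronglyMeasurable hb
  refine ⟨hI, fubini_zero 2 _ hI ?_⟩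
  intro x hx
  have hside : side 2 = Ioi 0 := rfl
  have h2 : ∀ s : ℝ, (x + (s - x 2) • (EuclideanSpace.single 2 1 : E3)) 2 = s := by
    intro s
    simp
  rw [hside, integral_Ioi_of_hasDerivAt_of_tendsto (m := 0)
      (f := fun r : ℝ => g (x + (r - x 2) • EuclideanSpace.single 2 1))]
  · rw [h0 _ (h2 0)]; simp
  · have hl : ContinuousWithinAt (fun r : ℝ => x + (r - x 2) • (EuclideanSpace.single 2 1 : E3))
        (Ici 0) 0 := by
      apply Continuous.continuousWithinAt
      fun_prop
    refine ContinuousWithinAt.comp (t := upperHalfSpace) (hcont _ (h2 0)) hl ?_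
    intro r hr
    show 0 ≤ (x + (r - x 2) • (EuclideanSpace.single 2 1 : E3)) 2
    rw [h2]; exact hr
  · intro s hs
    apply line_hasDerivAt
    apply hd
    rw [h2]; exact hs
  · refine Integrable.mono' ((exp_neg_integrableOn_Ioi 0 hc).const_mul K)
      (hm.comp (line_measurable x 2)).aestronglyMeasurable ?_
    filter_upwards [ae_restrict_mem measurableSet_Ioi] with s hs
    have := hb (x + (s - x 2) • (EuclideanSpace.single 2 1 : E3)) (by rw [h2]; exact hs)
    rw [h2] at this
    exact this
  · have ht : Filter.Tendsto (fun r : ℝ => K * Real.exp (-c * r)) Filter.atTop (nhds 0) := by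
      rw [← mul_zero K]
      apply Filter.Tendsto.const_mul
      apply Real.tendsto_exp_atBot.comp
      exact Filter.tendsto_id.const_mul_atTop_of_neg (by linarith)
    refine squeeze_zero_norm' ?_ ht
    filter_upwards [Filter.eventually_gt_atTop 0] with r hr
    have := hb0 (x + (r - x 2) • (EuclideanSpace.single 2 1 : E3)) (by rw [h2]; exact hr)
    rw [h2] at this
    exact this

lemma uhs_nhds {x : E3} (hx : 0 < x 2) : upperHalfSpace ∈ nhds x := by
  have hc : Continuous (fun y : E3 => y 2) := by fun_prop
  filter_upwards [hc.continuousAt.eventually (lt_mem_nhds hx)] with y hy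
  exact le_of_lt hy

lemma norm_single_one (i : Fin 3) : ‖(EuclideanSpace.single i 1 : E3)‖ = 1 := by simp

lemma fderiv_single_le {F : Type*} [NormedAddCommGroup F] [NormedSpace ℝ F]
    (L : E3 →L[ℝ] F) (i : Fin 3) : ‖L (EuclideanSpace.single i 1)‖ ≤ ‖L‖ := by
  have := L.le_opNorm (EuclideanSpace.single i 1)
  rwa [norm_single_one, mul_one] at this

lemma coord_le (v : E3) (i : Fin 3) : ‖v i‖ ≤ ‖v‖ := PiLp.norm_apply_le v i

lemma diff_fderiv {w : E3 → ℝ} {x : E3} (h : ContDiffAt ℝ 2 w x) :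
    DifferentiableAt ℝ (fderiv ℝ w) x := by
  have : ContDiffAt ℝ 1 (fderiv ℝ w) x := h.fderiv_right (by norm_num)
  exact this.differentiableAt (by norm_num)

lemma second_eq {w : E3 → ℝ} {x : E3} (h : ContDiffAt ℝ 2 w x) (i : Fin 3) :
    fderiv ℝ (fun y => fderiv ℝ w y (EuclideanSpace.single i 1)) x (EuclideanSpace.single i 1)
      = fderiv ℝ (fderiv ℝ w) x (EuclideanSpace.single i 1) (EuclideanSpace.single i 1) := by
  rw [((diff_fderiv h).hasFDerivAt.clm_apply
    (hasFDerivAt_const (EuclideanSpace.single i 1 : E3) x)).fderiv]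
  simp

lemma second_le {w : E3 → ℝ} {x : E3} (h : ContDiffAt ℝ 2 w x) (i : Fin 3) :
    ‖fderiv ℝ (fun y => fderiv ℝ w y (EuclideanSpace.single i 1)) x (EuclideanSpace.single i 1)‖
      ≤ ‖iteratedFDeriv ℝ 2 w x‖ := by
  rw [second_eq h]
  have h1 := iteratedFDeriv_two_apply (𝕜 := ℝ) w x
    ![(EuclideanSpace.single i 1 : E3), EuclideanSpace.single i 1]
  simp only [Matrix.cons_val_zero, Matrix.cons_val_one] at h1
  rw [← h1]
  refine (ContinuousMultilinearMap.le_opNorm _ _).trans ?_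
  simp [Fin.prod_univ_two]

lemma lap_le {w : E3 → ℝ} {x : E3} (h : ContDiffAt ℝ 2 w x) :
    ‖lap3 w x‖ ≤ 3 * ‖iteratedFDeriv ℝ 2 w x‖ := by
  unfold lap3
  refine (norm_sum_le _ _).trans ?_
  refine (Finset.sum_le_sum fun i _ => second_le h i).trans ?_
  simp

lemma lap_sub {f g : E3 → ℝ} {x : E3} (hx : 0 < x 2)
    (hf : ContDiffOn ℝ 2 f upperHalfSpace) (hg : ContDiffOn ℝ 2 g upperHalfSpace) :
    lap3 (fun y => f y - g y) x = lap3 f x - lap3 g x := by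
  unfold lap3
  rw [← Finset.sum_sub_distrib]
  refine Finset.sum_congr rfl fun i _ => ?_
  have hfx : ContDiffAt ℝ 2 f x := hf.contDiffAt (uhs_nhds hx)
  have hgx : ContDiffAt ℝ 2 g x := hg.contDiffAt (uhs_nhds hx)
  have hev : (fun y => fderiv ℝ (fun y => f y - g y) y (EuclideanSpace.single i 1)) =ᶠ[nhds x]
      fun y => fderiv ℝ f y (EuclideanSpace.single i 1)
        - fderiv ℝ g y (EuclideanSpace.single i 1) := by
    have hc : Continuous (fun y : E3 => y 2) := by fun_prop
    filter_upwards [hc.continuousAt.eventually (lt_mem_nhds hx)] with y hy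
    have hfy : ContDiffAt ℝ 2 f y := hf.contDiffAt (uhs_nhds hy)
    have hgy : ContDiffAt ℝ 2 g y := hg.contDiffAt (uhs_nhds hy)
    rw [fderiv_fun_sub (hfy.differentiableAt (by norm_num)) (hgy.differentiableAt (by norm_num))]
    simp
  rw [hev.fderiv_eq, fderiv_fun_sub]
  · simp
  · exact (diff_fderiv hfx).clm_apply (differentiableAt_const _)
  · exact (diff_fderiv hgx).clm_apply (differentiableAt_const _)

lemma periodic_fderiv {w : E3 → ℝ} (h : HorizontallyPeriodic w) (v : E3) :
    HorizontallyPeriodic (fun y => fderiv ℝ w y v) := by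
  constructor
  · intro x
    have : (fun y => w (y + (2 * Real.pi) • EuclideanSpace.single 0 (1 : ℝ))) = w := funext h.1
    beta_reduce
    rw [← fderiv_comp_add_right, this]
  · intro x
    have : (fun y => w (y + (2 * Real.pi) • EuclideanSpace.single 1 (1 : ℝ))) = w := funext h.2
    beta_reduce
    rw [← fderiv_comp_add_right, this]

lemma eq_sum_single (v : E3) : v = ∑ i : Fin 3, v i • (EuclideanSpace.single i 1 : E3) := by
  ext j
  fin_cases j <;> simp [Fin.sum_univ_three]

/-- Divergence theorem on the channel, componentwise form. -/
lemma div_all {c K : ℝ} (hc : 0 < c) (i : Fin 3) (g : E3 → ℝ)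
    (hd : ∀ x : E3, 0 < x 2 → DifferentiableAt ℝ g x)
    (hb : ∀ x : E3, 0 < x 2 →
      ‖fderiv ℝ g x (EuclideanSpace.single i 1)‖ ≤ K * Real.exp (-c * x 2))
    (hb0 : ∀ x : E3, 0 < x 2 → ‖g x‖ ≤ K * Real.exp (-c * x 2))
    (h0 : ∀ x : E3, x 2 = 0 → g x = 0)
    (hcont : ∀ x : E3, x 2 = 0 → ContinuousWithinAt g upperHalfSpace x)
    (hp : HorizontallyPeriodic g) :
    IntegrableOn (fun x => fderiv ℝ g x (EuclideanSpace.single i 1)) channel ∧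
      ∫ x in channel, fderiv ℝ g x (EuclideanSpace.single i 1) = 0 := by
  by_cases hi : i = 2
  · subst hi
    exact div_v hc g hd hb hb0 h0 hcont
  · exact div_h hc i hi g hd hb hp

/-- A function vanishing on the boundary times a bounded one is continuous at the boundary. -/
lemma cont_boundary {w b : E3 → ℝ} {D : ℝ} (hw : ContinuousOn w upperHalfSpace)
    (hw0 : ∀ x : E3, x 2 = 0 → w x = 0) (hb : ∀ x : E3, 0 < x 2 → ‖b x‖ ≤ D)
    (x : E3) (hx : x 2 = 0) : ContinuousWithinAt (fun y => w y * b y) upperHalfSpace x := by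
  unfold ContinuousWithinAt
  simp only [hw0 x hx, zero_mul]
  have h1 : Filter.Tendsto w (nhdsWithin x upperHalfSpace) (nhds 0) := by
    have := hw x (show 0 ≤ x 2 from hx.ge)
    unfold ContinuousWithinAt at this
    rwa [hw0 x hx] at this
  have h2 : Filter.Tendsto (fun y => ‖w y‖ * D) (nhdsWithin x upperHalfSpace) (nhds 0) := by
    have := h1.norm.mul_const D
    simpa using this
  refine squeeze_zero_norm' ?_ h2
  filter_upwards [self_mem_nhdsWithin] with y hy
  rcases (show 0 ≤ y 2 from hy).eq_or_lt with h | h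
  · simp [hw0 y h.symm]
  · rw [norm_mul]
    exact mul_le_mul_of_nonneg_left (hb y h) (norm_nonneg _)

section spatial
variable {c D : ℝ} {w : E3 → ℝ} {u : E3 → E3}

lemma exp_le_one' (hc : 0 < c) {x : E3} (hx : 0 < x 2) : Real.exp (-c * x 2) ≤ 1 := by
  rw [Real.exp_le_one_iff]
  nlinarith

lemma transport_zero (hc : 0 < c) (hD : 0 < D)
    (hw : ContDiffOn ℝ 2 w upperHalfSpace) (hu : ContDiffOn ℝ 2 u upperHalfSpace)
    (hwp : HorizontallyPeriodic w) (hup : HorizontallyPeriodic u)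
    (hwb : ∀ x : E3, 0 < x 2 → ‖w x‖ ≤ D * Real.exp (-c * x 2) ∧
      ‖fderiv ℝ w x‖ ≤ D * Real.exp (-c * x 2) ∧
      ‖iteratedFDeriv ℝ 2 w x‖ ≤ D * Real.exp (-c * x 2))
    (hub : ∀ x : E3, 0 < x 2 → ‖u x‖ ≤ D * Real.exp (-c * x 2) ∧
      ‖fderiv ℝ u x‖ ≤ D * Real.exp (-c * x 2))
    (hw0 : ∀ x : E3, x 2 = 0 → w x = 0)
    (hdiv : ∀ x : E3, 0 < x 2 → div3 u x = 0) :
    IntegrableOn (fun x => 2 * w x * fderiv ℝ w x (u x)) channel ∧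
      ∫ x in channel, 2 * w x * fderiv ℝ w x (u x) = 0 := by
  have hder : ∀ (i : Fin 3) (x : E3), 0 < x 2 →
      HasFDerivAt (fun y => w y * (w y * u y i))
        (w x • (w x • ((EuclideanSpace.proj i : E3 →L[ℝ] ℝ).comp (fderiv ℝ u x))
          + u x i • fderiv ℝ w x) + (w x * u x i) • fderiv ℝ w x) x := by
    intro i x hx
    have h1 : HasFDerivAt w (fderiv ℝ w x) x :=
      ((hw.contDiffAt (uhs_nhds hx)).differentiableAt (by norm_num)).hasFDerivAt
    have h2 : HasFDerivAt u (fderiv ℝ u x) x :=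
      ((hu.contDiffAt (uhs_nhds hx)).differentiableAt (by norm_num)).hasFDerivAt
    have h3 : HasFDerivAt (fun y => u y i)
        ((EuclideanSpace.proj i : E3 →L[ℝ] ℝ).comp (fderiv ℝ u x)) x :=
      (EuclideanSpace.proj i : E3 →L[ℝ] ℝ).hasFDerivAt.comp x h2
    exact h1.mul (h1.mul h3)
  have hval : ∀ (i : Fin 3) (x : E3), 0 < x 2 →
      fderiv ℝ (fun y => w y * (w y * u y i)) x (EuclideanSpace.single i 1) =
        w x * (w x * (fderiv ℝ u x (EuclideanSpace.single i 1) i)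
          + u x i * fderiv ℝ w x (EuclideanSpace.single i 1))
          + (w x * u x i) * fderiv ℝ w x (EuclideanSpace.single i 1) := by
    intro i x hx
    rw [(hder i x hx).fderiv]
    simp
    ring
  have hmain : ∀ i : Fin 3,
      IntegrableOn (fun x => fderiv ℝ (fun y => w y * (w y * u y i)) x
        (EuclideanSpace.single i 1)) channel ∧
      ∫ x in channel, fderiv ℝ (fun y => w y * (w y * u y i)) x
        (EuclideanSpace.single i 1) = 0 := by
    intro i
    refine div_all (K := 3 * D ^ 3) hc i _ (fun x hx => (hder i x hx).differentiableAt)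
      ?_ ?_ ?_ ?_ ?_
    · intro x hx
      rw [hval i x hx]
      obtain ⟨b1, b2, -⟩ := hwb x hx
      obtain ⟨b3, b4⟩ := hub x hx
      have he := exp_le_one' hc hx
      have he0 := Real.exp_pos (-c * x 2)
      set e := Real.exp (-c * x 2)
      have a2 := (fderiv_single_le (fderiv ℝ w x) i).trans b2
      have a3 := (coord_le (u x) i).trans b3
      have a4 := ((coord_le _ i).trans (fderiv_single_le (fderiv ℝ u x) i)).trans b4
      have hDe : D * e ≤ D := by nlinarith
      have b1' := b1.trans hDe
      have a2' := a2.trans hDe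
      have a3' := a3.trans hDe
      have a4' := a4.trans hDe
      calc _ ≤ ‖w x‖ * (‖w x‖ * ‖fderiv ℝ u x (EuclideanSpace.single i 1) i‖
          + ‖u x i‖ * ‖fderiv ℝ w x (EuclideanSpace.single i 1)‖)
          + (‖w x‖ * ‖u x i‖) * ‖fderiv ℝ w x (EuclideanSpace.single i 1)‖ := by
            refine (norm_add_le _ _).trans ?_
            rw [norm_mul, norm_mul, norm_mul]
            gcongr
            refine (norm_add_le _ _).trans ?_
            rw [norm_mul, norm_mul]
        _ ≤ (D * e) * (D * D + D * D) + ((D * e) * D) * D := by gcongr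
        _ = 3 * D ^ 3 * e := by ring
    · intro x hx
      obtain ⟨b1, b2, -⟩ := hwb x hx
      obtain ⟨b3, b4⟩ := hub x hx
      have he := exp_le_one' hc hx
      have he0 := Real.exp_pos (-c * x 2)
      set e := Real.exp (-c * x 2)
      have a3 := (coord_le (u x) i).trans b3
      have hDe : D * e ≤ D := by nlinarith
      rw [norm_mul, norm_mul]
      calc _ ≤ (D * e) * (D * D) := by
            have b1' := b1.trans hDe
            have a3' := a3.trans hDe
            gcongr
        _ ≤ 3 * D ^ 3 * e := by
            have : 0 < D ^ 3 * e := by positivity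
            nlinarith
    · intro x hx
      simp [hw0 x hx]
    · refine cont_boundary (D := D * D) hw.continuousOn hw0 ?_
      intro x hx
      have he := exp_le_one' hc hx
      obtain ⟨b1, -, -⟩ := hwb x hx
      obtain ⟨b3, -⟩ := hub x hx
      have a3 := (coord_le (u x) i).trans b3
      have hDe : D * Real.exp (-c * x 2) ≤ D := by nlinarith
      rw [norm_mul]
      have b1' := b1.trans hDe
      have a3' := a3.trans hDe
      gcongr
    · exact ⟨fun x => by beta_reduce; rw [hwp.1, hup.1], fun x => by beta_reduce; rw [hwp.2, hup.2]⟩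
  have hpt : ∀ x ∈ channel, ∑ i : Fin 3, fderiv ℝ (fun y => w y * (w y * u y i)) x
        (EuclideanSpace.single i 1) = 2 * w x * fderiv ℝ w x (u x) := by
    intro x hx
    have hx2 := channel_pos hx
    have hd0 := hdiv x hx2
    unfold div3 at hd0
    have hsum : fderiv ℝ w x (u x) =
        ∑ i : Fin 3, u x i * fderiv ℝ w x (EuclideanSpace.single i 1) := by
      conv_lhs => rw [eq_sum_single (u x)]
      simp only [map_sum, map_smul, smul_eq_mul]
    rw [Finset.sum_congr rfl fun i _ => hval i x hx2, hsum]
    simp only [Fin.sum_univ_three] at hd0 ⊢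
    linear_combination (w x) ^ 2 * hd0
  constructor
  · refine IntegrableOn.congr_fun ?_ hpt measurableSet_channel
    exact integrable_finsetSum _ fun i _ => (hmain i).1
  · rw [← setIntegral_congr_fun measurableSet_channel hpt,
      integral_finsetSum _ fun i _ => (hmain i).1]
    simp [(hmain _).2]

lemma laplace_nonpos (hc : 0 < c) (hD : 0 < D)
    (hw : ContDiffOn ℝ 2 w upperHalfSpace)
    (hwp : HorizontallyPeriodic w)
    (hwb : ∀ x : E3, 0 < x 2 → ‖w x‖ ≤ D * Real.exp (-c * x 2) ∧
      ‖fderiv ℝ w x‖ ≤ D * Real.exp (-c * x 2) ∧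
      ‖iteratedFDeriv ℝ 2 w x‖ ≤ D * Real.exp (-c * x 2))
    (hw0 : ∀ x : E3, x 2 = 0 → w x = 0) :
    ∃ G : E3 → ℝ, IntegrableOn G channel ∧ ∫ x in channel, G x = 0 ∧
      ∀ x : E3, 0 < x 2 → w x * lap3 w x ≤ G x := by
  have hder : ∀ (i : Fin 3) (x : E3), 0 < x 2 →
      HasFDerivAt (fun y => w y * fderiv ℝ w y (EuclideanSpace.single i 1))
        (w x • (fderiv ℝ (fun y => fderiv ℝ w y (EuclideanSpace.single i 1)) x)
          + (fderiv ℝ w x (EuclideanSpace.single i 1)) • fderiv ℝ w x) x := by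
    intro i x hx
    have h0 : ContDiffAt ℝ 2 w x := hw.contDiffAt (uhs_nhds hx)
    have h1 : HasFDerivAt w (fderiv ℝ w x) x :=
      (h0.differentiableAt (by norm_num)).hasFDerivAt
    have h2 : DifferentiableAt ℝ (fun y => fderiv ℝ w y (EuclideanSpace.single i 1)) x :=
      (diff_fderiv h0).clm_apply (differentiableAt_const _)
    exact h1.mul h2.hasFDerivAt
  have hval : ∀ (i : Fin 3) (x : E3), 0 < x 2 →
      fderiv ℝ (fun y => w y * fderiv ℝ w y (EuclideanSpace.single i 1)) x
        (EuclideanSpace.single i 1) =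
        w x * (fderiv ℝ (fun y => fderiv ℝ w y (EuclideanSpace.single i 1)) x
          (EuclideanSpace.single i 1))
          + (fderiv ℝ w x (EuclideanSpace.single i 1)) ^ 2 := by
    intro i x hx
    rw [(hder i x hx).fderiv]
    simp [sq]
  have hmain : ∀ i : Fin 3,
      IntegrableOn (fun x => fderiv ℝ (fun y => w y * fderiv ℝ w y (EuclideanSpace.single i 1)) x
        (EuclideanSpace.single i 1)) channel ∧
      ∫ x in channel, fderiv ℝ (fun y => w y * fderiv ℝ w y (EuclideanSpace.single i 1)) x
        (EuclideanSpace.single i 1) = 0 := by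
    intro i
    refine div_all (K := 2 * D ^ 2) hc i _ (fun x hx => (hder i x hx).differentiableAt)
      ?_ ?_ ?_ ?_ ?_
    · intro x hx
      rw [hval i x hx]
      obtain ⟨b1, b2, b3⟩ := hwb x hx
      have he := exp_le_one' hc hx
      have he0 := Real.exp_pos (-c * x 2)
      set e := Real.exp (-c * x 2)
      have a2 := (fderiv_single_le (fderiv ℝ w x) i).trans b2
      have a3 := (second_le (hw.contDiffAt (uhs_nhds hx)) i).trans b3
      have hDe : D * e ≤ D := by nlinarith
      have a2' := a2.trans hDe
      have a3' := a3.trans hDe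
      refine (norm_add_le _ _).trans ?_
      rw [norm_mul, sq, norm_mul]
      calc _ ≤ (D * e) * D + (D * e) * D := by gcongr
        _ = 2 * D ^ 2 * e := by ring
    · intro x hx
      obtain ⟨b1, b2, b3⟩ := hwb x hx
      have he := exp_le_one' hc hx
      have he0 := Real.exp_pos (-c * x 2)
      set e := Real.exp (-c * x 2)
      have a2 := (fderiv_single_le (fderiv ℝ w x) i).trans b2
      have hDe : D * e ≤ D := by nlinarith
      have a2' := a2.trans hDe
      rw [norm_mul]
      calc _ ≤ (D * e) * D := by gcongr
        _ ≤ 2 * D ^ 2 * e := by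
            have : 0 < D ^ 2 * e := by positivity
            nlinarith
    · intro x hx
      simp [hw0 x hx]
    · refine cont_boundary (D := D) hw.continuousOn hw0 ?_
      intro x hx
      have he := exp_le_one' hc hx
      obtain ⟨b1, b2, -⟩ := hwb x hx
      have a2 := (fderiv_single_le (fderiv ℝ w x) i).trans b2
      have hDe : D * Real.exp (-c * x 2) ≤ D := by nlinarith
      exact a2.trans hDe
    · have h := periodic_fderiv hwp (EuclideanSpace.single i 1)
      exact ⟨fun x => by beta_reduce; rw [hwp.1]; exact congrArg (w x * ·) (h.1 x),
        fun x => by beta_reduce; rw [hwp.2]; exact congrArg (w x * ·) (h.2 x)⟩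
  refine ⟨fun x => ∑ i : Fin 3, fderiv ℝ
    (fun y => w y * fderiv ℝ w y (EuclideanSpace.single i 1)) x (EuclideanSpace.single i 1),
    integrable_finsetSum _ fun i _ => (hmain i).1, ?_, ?_⟩
  · rw [integral_finsetSum _ fun i _ => (hmain i).1]
    simp [(hmain _).2]
  · intro x hx
    unfold lap3
    rw [Finset.mul_sum]
    refine Finset.sum_le_sum fun i _ => ?_
    rw [hval i x hx]
    nlinarith [sq_nonneg (fderiv ℝ w x (EuclideanSpace.single i 1))]

end spatial

lemma aesm_of_contDiffOn {F : Type*} [NormedAddCommGroup F] [NormedSpace ℝ F]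
    [SecondCountableTopology F] {f : E3 → F}
    (hf : ContDiffOn ℝ 2 f upperHalfSpace) :
    AEStronglyMeasurable f (volume.restrict channel) :=
  (hf.continuousOn.mono fun x hx => le_of_lt (channel_pos hx)).aestronglyMeasurable
    measurableSet_channel

lemma aesm_fderiv_apply {f : E3 → ℝ} {v : E3 → E3}
    (hv : AEStronglyMeasurable v (volume.restrict channel)) :
    AEStronglyMeasurable (fun x => fderiv ℝ f x (v x)) (volume.restrict channel) := by
  have h : (fun x => fderiv ℝ f x (v x)) =
      fun x => ∑ i : Fin 3, v x i * fderiv ℝ f x (EuclideanSpace.single i 1) := by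
    funext x
    conv_lhs => rw [eq_sum_single (v x)]
    simp only [map_sum, map_smul, smul_eq_mul]
  rw [h]
  refine Finset.aestronglyMeasurable_fun_sum _ fun i _ => ?_
  refine AEStronglyMeasurable.mul ?_
    (measurable_fderiv_apply_const ℝ f (EuclideanSpace.single i 1)).aestronglyMeasurable
  exact (EuclideanSpace.proj i : E3 →L[ℝ] ℝ).continuous.comp_aestronglyMeasurable hv

lemma measurable_lap (f : E3 → ℝ) : Measurable (lap3 f) := by
  unfold lap3
  exact Finset.measurable_fun_sum _ fun i _ => measurable_fderiv_apply_const ℝ _ _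

lemma time_contDiffOn {F : Type*} [NormedAddCommGroup F] [NormedSpace ℝ F] {T : ℝ}
    {f : ℝ → E3 → F} (hf : RegC1C2 T f) {x : E3} (hx : 0 < x 2) :
    ContDiffOn ℝ 1 (fun s => f s x) (Icc 0 T) := by
  have h1 : ContDiff ℝ 1 (fun s : ℝ => (s, x)) := by fun_prop
  exact hf.1.comp h1.contDiffOn fun s hs => ⟨hs, le_of_lt hx⟩

lemma time_hasDerivAt {T : ℝ}
    {f : ℝ → E3 → ℝ} (hf : RegC1C2 T f) {x : E3} (hx : 0 < x 2) {t : ℝ} (ht : t ∈ Ioo 0 T) :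
    HasDerivAt (fun s => f s x) (derivWithin (fun s => f s x) (Icc 0 T) t) t := by
  have h := ((time_contDiffOn hf hx).differentiableOn (by norm_num)) t (Ioo_subset_Icc_self ht)
  exact h.hasDerivWithinAt.hasDerivAt (Icc_mem_nhds ht.1 ht.2)

lemma decay_sub {f g : E3 → ℝ} {C c : ℝ} {x : E3} (hx : 0 < x 2)
    (hf : ContDiffOn ℝ 2 f upperHalfSpace) (hg : ContDiffOn ℝ 2 g upperHalfSpace)
    (hfb : ‖f x‖ ≤ C * Real.exp (-c * x 2) ∧ ‖fderiv ℝ f x‖ ≤ C * Real.exp (-c * x 2) ∧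
      ‖iteratedFDeriv ℝ 2 f x‖ ≤ C * Real.exp (-c * x 2))
    (hgb : ‖g x‖ ≤ C * Real.exp (-c * x 2) ∧ ‖fderiv ℝ g x‖ ≤ C * Real.exp (-c * x 2) ∧
      ‖iteratedFDeriv ℝ 2 g x‖ ≤ C * Real.exp (-c * x 2)) :
    ‖f x - g x‖ ≤ (2 * C) * Real.exp (-c * x 2) ∧
      ‖fderiv ℝ (fun y => f y - g y) x‖ ≤ (2 * C) * Real.exp (-c * x 2) ∧
      ‖iteratedFDeriv ℝ 2 (fun y => f y - g y) x‖ ≤ (2 * C) * Real.exp (-c * x 2) := by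
  have hfx : ContDiffAt ℝ 2 f x := hf.contDiffAt (uhs_nhds hx)
  have hgx : ContDiffAt ℝ 2 g x := hg.contDiffAt (uhs_nhds hx)
  obtain ⟨f1, f2, f3⟩ := hfb
  obtain ⟨g1, g2, g3⟩ := hgb
  refine ⟨?_, ?_, ?_⟩
  · have := norm_sub_le (f x) (g x)
    linarith
  · rw [fderiv_fun_sub (hfx.differentiableAt (by norm_num)) (hgx.differentiableAt (by norm_num))]
    have := norm_sub_le (fderiv ℝ f x) (fderiv ℝ g x)
    linarith
  · have h : iteratedFDeriv ℝ 2 (fun y => f y - g y) x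
        = iteratedFDeriv ℝ 2 f x - iteratedFDeriv ℝ 2 g x := iteratedFDeriv_sub_apply hfx hgx
    rw [h]
    have := norm_sub_le (iteratedFDeriv ℝ 2 f x) (iteratedFDeriv ℝ 2 g x)
    linarith

lemma integral_five {f₁ f₂ f₃ f₄ f₅ : E3 → ℝ} {μ : Measure E3} (h₁ : Integrable f₁ μ)
    (h₂ : Integrable f₂ μ) (h₃ : Integrable f₃ μ) (h₄ : Integrable f₄ μ) (h₅ : Integrable f₅ μ) :
    ∫ x, ((((-(f₁ x) + f₂ x) + f₃ x) + f₄ x) + f₅ x) ∂μ =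
      -(∫ x, f₁ x ∂μ) + (∫ x, f₂ x ∂μ) + (∫ x, f₃ x ∂μ) + (∫ x, f₄ x ∂μ) + ∫ x, f₅ x ∂μ := by
  have k1 : Integrable (fun x => -(f₁ x)) μ := h₁.neg
  have k2 : Integrable (fun x => -(f₁ x) + f₂ x) μ := k1.add h₂
  have k3 : Integrable (fun x => -(f₁ x) + f₂ x + f₃ x) μ := k2.add h₃
  have k4 : Integrable (fun x => -(f₁ x) + f₂ x + f₃ x + f₄ x) μ := k3.add h₄
  rw [integral_add k4 h₅, integral_add k3 h₄, integral_add k2 h₃, integral_add k1 h₂,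
    integral_neg]

/-- Quantitative convergence of the heat flow of the Navier–Stokes–Fourier system to the
transported heat of the Euler system: there is a constant `C′`, depending only on `M` and
`η_c`, such that under hypotheses (i)–(v),
`sup_{0≤t≤T} ‖(θ−θ_E)(t)‖²_{L²(Ω)} ≤ C′ e^{C′T} ( ∫₀^T ‖(u−u_E)(t)‖²_{L²(Ω)} dt + κ²T )`. -/
theorem heat_flow_convergence (ηc M : ℝ) (hηc : 0 < ηc) (hM : 0 ≤ M) :
    ∃ C' : ℝ, 0 < C' ∧
      ∀ (T κ : ℝ)
        (u uE : ℝ → EuclideanSpace ℝ (Fin 3) → EuclideanSpace ℝ (Fin 3))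
        (θ θE : ℝ → EuclideanSpace ℝ (Fin 3) → ℝ) (C c : ℝ),
        0 < T → 0 < κ → 0 < C → 0 < c →
        (∀ t ∈ Icc (0 : ℝ) T, HorizontallyPeriodic (u t) ∧ HorizontallyPeriodic (uE t) ∧
          HorizontallyPeriodic (θ t) ∧ HorizontallyPeriodic (θE t)) →
        RegC1C2 T u → RegC1C2 T uE → RegC1C2 T θ → RegC1C2 T θE →
        DecaysExp T C c u → DecaysExp T C c uE → DecaysExp T C c θ → DecaysExp T C c θE →
        -- (i) incompressibility and no-slip boundary condition for `u`
        (∀ t ∈ Icc (0 : ℝ) T, ∀ x : EuclideanSpace ℝ (Fin 3), 0 < x 2 → div3 (u t) x = 0) →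
        (∀ t ∈ Icc (0 : ℝ) T, ∀ x : EuclideanSpace ℝ (Fin 3), x 2 = 0 → u t x = 0) →
        -- (ii) heat equation with Dirichlet boundary condition for `θ`
        (∀ t ∈ Icc (0 : ℝ) T, ∀ x : EuclideanSpace ℝ (Fin 3), 0 < x 2 →
          derivWithin (fun s => θ s x) (Icc 0 T) t + fderiv ℝ (θ t) x (u t x) -
            κ * ηc * lap3 (θ t) x = 0) →
        (∀ t ∈ Icc (0 : ℝ) T, ∀ x : EuclideanSpace ℝ (Fin 3), x 2 = 0 → θ t x = 0) →
        -- (iii) transport equation with Dirichlet boundary condition for `θ_E`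
        (∀ t ∈ Icc (0 : ℝ) T, ∀ x : EuclideanSpace ℝ (Fin 3), 0 < x 2 →
          derivWithin (fun s => θE s x) (Icc 0 T) t + fderiv ℝ (θE t) x (uE t x) = 0) →
        (∀ t ∈ Icc (0 : ℝ) T, ∀ x : EuclideanSpace ℝ (Fin 3), x 2 = 0 → θE t x = 0) →
        -- (iv) same initial data
        (∀ x : EuclideanSpace ℝ (Fin 3), θ 0 x = θE 0 x) →
        -- (v) bounds on `∇θ_E` in `L^∞` and `Δθ_E` in `L²`
        (∀ t ∈ Icc (0 : ℝ) T, ∀ x : EuclideanSpace ℝ (Fin 3), 0 < x 2 →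
          ‖fderiv ℝ (θE t) x‖ ≤ M) →
        (∀ t ∈ Icc (0 : ℝ) T, (∫ x in channel, (lap3 (θE t) x) ^ 2) ≤ M ^ 2) →
        ∀ t ∈ Icc (0 : ℝ) T,
          (∫ x in channel, (θ t x - θE t x) ^ 2) ≤
            C' * Real.exp (C' * T) *
              ((∫ s in Icc (0 : ℝ) T, ∫ x in channel, ‖u s x - uE s x‖ ^ 2) + κ ^ 2 * T) := by
  refine ⟨M ^ 2 + ηc ^ 2 * M ^ 2 + 2, by positivity, ?_⟩
  intro T κ u uE θ θE C c hT hκ hC hc hper hu huE hθ hθE du duE dθ dθE hdiv hu0 heat hθ0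
    trans hθE0 hinit hgrad hlap t ht
  set V : ℝ → ℝ := fun s => ∫ x in channel, ‖u s x - uE s x‖ ^ 2 with hV
  set F : ℝ → ℝ := fun s => ∫ x in channel, (θ s x - θE s x) ^ 2 with hF
  set R : ℝ → E3 → ℝ := fun s x => -(fderiv ℝ (θ s) x (u s x)) + κ * ηc * lap3 (θ s) x
    + fderiv ℝ (θE s) x (uE s x) with hR
  have hη : 0 < κ * ηc := by positivity
  have hexp := integrableOn_exp hc
  have hwreg : ∀ s ∈ Icc (0 : ℝ) T, ContDiffOn ℝ 2 (fun y => θ s y - θE s y) upperHalfSpace :=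
    fun s hs => (hθ.2 s hs).sub (hθE.2 s hs)
  have hvreg : ∀ s ∈ Icc (0 : ℝ) T, ContDiffOn ℝ 2 (fun y => u s y - uE s y) upperHalfSpace :=
    fun s hs => (hu.2 s hs).sub (huE.2 s hs)
  have hwb : ∀ s ∈ Icc (0 : ℝ) T, ∀ x : E3, 0 < x 2 →
      ‖θ s x - θE s x‖ ≤ (2 * C) * Real.exp (-c * x 2) ∧
      ‖fderiv ℝ (fun y => θ s y - θE s y) x‖ ≤ (2 * C) * Real.exp (-c * x 2) ∧
      ‖iteratedFDeriv ℝ 2 (fun y => θ s y - θE s y) x‖ ≤ (2 * C) * Real.exp (-c * x 2) :=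
    fun s hs x hx => decay_sub hx (hθ.2 s hs) (hθE.2 s hs) (dθ s hs x hx) (dθE s hs x hx)
  have hCe : ∀ x : E3, 0 < x 2 → C * Real.exp (-c * x 2) ≤ C := by
    intro x hx
    have := exp_le_one' hc hx
    nlinarith
  -- square bounds
  have hsq : ∀ x : E3, 0 < x 2 → ((2 * C) * Real.exp (-c * x 2)) ^ 2
      ≤ (4 * C ^ 2) * Real.exp (-c * x 2) := by
    intro x hx
    have h1 := exp_le_one' hc hx
    have h2 := Real.exp_pos (-c * x 2)
    have h3 : Real.exp (-c * x 2) ^ 2 ≤ Real.exp (-c * x 2) := by nlinarith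
    have h4 : 0 ≤ 4 * C ^ 2 := by positivity
    nlinarith [mul_le_mul_of_nonneg_left h3 h4]
  have hw2b : ∀ s ∈ Icc (0 : ℝ) T, ∀ x : E3, 0 < x 2 →
      ‖(θ s x - θE s x) ^ 2‖ ≤ (4 * C ^ 2) * Real.exp (-c * x 2) := by
    intro s hs x hx
    rw [norm_pow]
    exact (pow_le_pow_left₀ (norm_nonneg _) (hwb s hs x hx).1 2).trans (hsq x hx)
  have hv2b : ∀ s ∈ Icc (0 : ℝ) T, ∀ x : E3, 0 < x 2 →
      ‖‖u s x - uE s x‖ ^ 2‖ ≤ (4 * C ^ 2) * Real.exp (-c * x 2) := by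
    intro s hs x hx
    rw [norm_pow, norm_norm]
    refine (pow_le_pow_left₀ (norm_nonneg _) ?_ 2).trans (hsq x hx)
    have := norm_sub_le (u s x) (uE s x)
    have h1 := (du s hs x hx).1
    have h2 := (duE s hs x hx).1
    linarith
  have hw2m : ∀ s ∈ Icc (0 : ℝ) T,
      AEStronglyMeasurable (fun x => (θ s x - θE s x) ^ 2) (volume.restrict channel) :=
    fun s hs => (aesm_of_contDiffOn (hwreg s hs)).pow 2
  have hv2m : ∀ s ∈ Icc (0 : ℝ) T,
      AEStronglyMeasurable (fun x => ‖u s x - uE s x‖ ^ 2) (volume.restrict channel) :=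
    fun s hs => (aesm_of_contDiffOn (hvreg s hs)).norm.pow 2
  have hw2i : ∀ s ∈ Icc (0 : ℝ) T, IntegrableOn (fun x => (θ s x - θE s x) ^ 2) channel :=
    fun s hs => bdd_int hc (hw2m s hs) (hw2b s hs)
  have hv2i : ∀ s ∈ Icc (0 : ℝ) T, IntegrableOn (fun x => ‖u s x - uE s x‖ ^ 2) channel :=
    fun s hs => bdd_int hc (hv2m s hs) (hv2b s hs)
  have hLi : ∀ s ∈ Icc (0 : ℝ) T, IntegrableOn (fun x => (lap3 (θE s) x) ^ 2) channel := by
    intro s hs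
    refine bdd_int (K := 9 * C ^ 2) hc ((measurable_lap _).pow_const 2).aestronglyMeasurable ?_
    intro x hx
    have h1 := lap_le ((hθE.2 s hs).contDiffAt (uhs_nhds hx))
    have h2 := (dθE s hs x hx).2.2
    have h3 : ‖lap3 (θE s) x‖ ≤ 3 * (C * Real.exp (-c * x 2)) := by linarith
    rw [norm_pow]
    refine (pow_le_pow_left₀ (norm_nonneg _) h3 2).trans ?_
    have := hsq x hx
    nlinarith
  have hae : ∀ {p : E3 → Prop}, (∀ x : E3, 0 < x 2 → p x) → ∀ᵐ x ∂(volume.restrict channel), p x := by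
    intro p hp
    filter_upwards [ae_restrict_mem measurableSet_channel] with x hx
    exact hp x (channel_pos hx)
  have hFc : ContinuousOn F (Icc 0 T) := by
    refine continuousOn_of_dominated hw2m (fun s hs => hae (hw2b s hs))
      (hexp.const_mul (4 * C ^ 2)) (hae fun x hx => ?_)
    exact ((time_contDiffOn hθ hx).continuousOn.sub (time_contDiffOn hθE hx).continuousOn).pow 2
  have hVc : ContinuousOn V (Icc 0 T) := by
    refine continuousOn_of_dominated hv2m (fun s hs => hae (hv2b s hs))
      (hexp.const_mul (4 * C ^ 2)) (hae fun x hx => ?_)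
    exact ((time_contDiffOn hu hx).continuousOn.sub
      (time_contDiffOn huE hx).continuousOn).norm.pow 2
  -- time derivative
  have hRb : ∀ s ∈ Icc (0 : ℝ) T, ∀ x : E3, 0 < x 2 →
      ‖R s x‖ ≤ 2 * C ^ 2 + κ * ηc * (3 * C) := by
    intro s hs x hx
    have e := hCe x hx
    have h1 : ‖fderiv ℝ (θ s) x (u s x)‖ ≤ C * C :=
      (ContinuousLinearMap.le_opNorm _ _).trans (mul_le_mul ((dθ s hs x hx).2.1.trans e)
        ((du s hs x hx).1.trans e) (norm_nonneg _) hC.le)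
    have h2 : ‖fderiv ℝ (θE s) x (uE s x)‖ ≤ C * C :=
      (ContinuousLinearMap.le_opNorm _ _).trans (mul_le_mul ((dθE s hs x hx).2.1.trans e)
        ((duE s hs x hx).1.trans e) (norm_nonneg _) hC.le)
    have h3 : ‖lap3 (θ s) x‖ ≤ 3 * C := by
      have := lap_le ((hθ.2 s hs).contDiffAt (uhs_nhds hx))
      have := (dθ s hs x hx).2.2
      linarith
    have h4 : ‖κ * ηc * lap3 (θ s) x‖ ≤ κ * ηc * (3 * C) := by
      rw [norm_mul, Real.norm_of_nonneg hη.le]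
      gcongr
    have h5 := norm_add_le (-(fderiv ℝ (θ s) x (u s x)) + κ * ηc * lap3 (θ s) x)
      (fderiv ℝ (θE s) x (uE s x))
    have h6 := norm_add_le (-(fderiv ℝ (θ s) x (u s x))) (κ * ηc * lap3 (θ s) x)
    rw [norm_neg] at h6
    have h7 : ‖R s x‖ = ‖-(fderiv ℝ (θ s) x (u s x)) + κ * ηc * lap3 (θ s) x
      + fderiv ℝ (θE s) x (uE s x)‖ := rfl
    nlinarith
  have hF' : ∀ s ∈ Ioo (0 : ℝ) T,
      IntegrableOn (fun x => 2 * (θ s x - θE s x) * R s x) channel ∧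
      HasDerivAt F (∫ x in channel, 2 * (θ s x - θE s x) * R s x) s := by
    intro s hs
    have hsI := Ioo_subset_Icc_self hs
    refine hasDerivAt_integral_of_dominated_loc_of_deriv_le
      (F := fun r x => (θ r x - θE r x) ^ 2)
      (F' := fun r x => 2 * (θ r x - θE r x) * R r x)
      (bound := fun x => (2 * (2 * C) * (2 * C ^ 2 + κ * ηc * (3 * C))) * Real.exp (-c * x 2))
      (s := Ioo 0 T)
      (Ioo_mem_nhds hs.1 hs.2) ?_ (hw2i s hsI) ?_ (hae fun x hx r hr => ?_) (hexp.const_mul _)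
      (hae fun x hx r hr => ?_)
    · filter_upwards [Ioo_mem_nhds hs.1 hs.2] with r hr
      exact hw2m r (Ioo_subset_Icc_self hr)
    · refine ((aesm_of_contDiffOn (hwreg s hsI)).const_mul 2).mul ?_
      refine AEStronglyMeasurable.add (AEStronglyMeasurable.add ?_ ?_) ?_
      · exact (aesm_fderiv_apply (aesm_of_contDiffOn (hu.2 s hsI))).neg
      · exact ((measurable_lap _).const_mul _).aestronglyMeasurable
      · exact aesm_fderiv_apply (aesm_of_contDiffOn (huE.2 s hsI))
    · have hrI := Ioo_subset_Icc_self hr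
      have h1 := (hwb r hrI x hx).1
      have h2 := hRb r hrI x hx
      rw [norm_mul, norm_mul, Real.norm_of_nonneg (zero_le_two : (0 : ℝ) ≤ 2)]
      calc _ ≤ 2 * (2 * C * Real.exp (-c * x 2)) * (2 * C ^ 2 + κ * ηc * (3 * C)) := by gcongr
        _ = _ := by ring
    · have hrI := Ioo_subset_Icc_self hr
      have h1 := time_hasDerivAt hθ hx hr
      have h2 := time_hasDerivAt hθE hx hr
      have h3 := heat r hrI x hx
      have h4 := trans r hrI x hx
      have h5 := (h1.sub h2).pow 2
      have h6 : R r x = derivWithin (fun s => θ s x) (Icc 0 T) r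
          - derivWithin (fun s => θE s x) (Icc 0 T) r := by
        simp only [hR]
        linarith
      refine HasDerivAt.congr_deriv (f := fun r => (θ r x - θE r x) ^ 2) h5 ?_
      rw [h6]
      simp
  -- energy inequality
  have hen : ∀ s ∈ Ioo (0 : ℝ) T, (∫ x in channel, 2 * (θ s x - θE s x) * R s x) ≤
      2 * F s + M ^ 2 * V s + (κ * ηc) ^ 2 * M ^ 2 := by
    intro s hs
    have hsI := Ioo_subset_Icc_self hs
    obtain ⟨p1, p2, p3, p4⟩ := hper s hsI
    have hwp : HorizontallyPeriodic (fun y => θ s y - θE s y) :=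
      ⟨fun x => by beta_reduce; rw [p3.1, p4.1], fun x => by beta_reduce; rw [p3.2, p4.2]⟩
    have hw0 : ∀ x : E3, x 2 = 0 → θ s x - θE s x = 0 := by
      intro x hx
      rw [hθ0 s hsI x hx, hθE0 s hsI x hx, sub_zero]
    obtain ⟨t1, t2⟩ := transport_zero (D := 2 * C) hc (by positivity) (hwreg s hsI) (hu.2 s hsI)
      hwp p1 (hwb s hsI) (fun x hx => by
        obtain ⟨a, b, -⟩ := du s hsI x hx
        have : 0 < C * Real.exp (-c * x 2) := by positivity
        exact ⟨by linarith, by linarith⟩) hw0 (hdiv s hsI)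
    obtain ⟨G, g1, g2, g3⟩ := laplace_nonpos (D := 2 * C) hc (by positivity) (hwreg s hsI)
      hwp (hwb s hsI) hw0
    have i1 := t1.neg
    have i2 := g1.const_mul (2 * (κ * ηc))
    have i3 := (hw2i s hsI).const_mul 2
    have i4 := (hv2i s hsI).const_mul (M ^ 2)
    have i5 := (hLi s hsI).const_mul ((κ * ηc) ^ 2)
    have hle : (∫ x in channel, 2 * (θ s x - θE s x) * R s x) ≤
        ∫ x in channel, ((((-(2 * (θ s x - θE s x) *
          fderiv ℝ (fun y => θ s y - θE s y) x (u s x)) + 2 * (κ * ηc) * G x)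
          + 2 * (θ s x - θE s x) ^ 2) + M ^ 2 * ‖u s x - uE s x‖ ^ 2)
          + (κ * ηc) ^ 2 * (lap3 (θE s) x) ^ 2) := by
      refine setIntegral_mono_on (hF' s hs).1 ((((i1.add i2).add i3).add i4).add i5)
        measurableSet_channel ?_
      intro x hx
      have hx2 := channel_pos hx
      have l1 := lap_sub hx2 (hθ.2 s hsI) (hθE.2 s hsI)
      have l2 := g3 x hx2
      beta_reduce at l2
      rw [l1] at l2
      have d1 : fderiv ℝ (fun y => θ s y - θE s y) x = fderiv ℝ (θ s) x - fderiv ℝ (θE s) x :=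
        fderiv_fun_sub
          (((hθ.2 s hsI).contDiffAt (uhs_nhds hx2)).differentiableAt (by norm_num))
          (((hθE.2 s hsI).contDiffAt (uhs_nhds hx2)).differentiableAt (by norm_num))
      rw [d1, sub_apply]
      have a1 : |fderiv ℝ (θE s) x (u s x - uE s x)| ≤ M * ‖u s x - uE s x‖ :=
        (ContinuousLinearMap.le_opNorm _ _).trans
          (mul_le_mul_of_nonneg_right (hgrad s hsI x hx2) (norm_nonneg _))
      have a2 : (fderiv ℝ (θE s) x (u s x - uE s x)) ^ 2 ≤ M ^ 2 * ‖u s x - uE s x‖ ^ 2 := by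
        rw [← sq_abs, ← mul_pow]
        exact pow_le_pow_left₀ (abs_nonneg _) a1 2
      rw [map_sub] at a2
      simp only [hR]
      generalize θ s x - θE s x = w at *
      generalize fderiv ℝ (θ s) x (u s x) = A at *
      generalize fderiv ℝ (θE s) x (u s x) = B at *
      generalize fderiv ℝ (θE s) x (uE s x) = B' at *
      generalize lap3 (θ s) x = l at *
      generalize lap3 (θE s) x = lE at *
      have m1 := mul_le_mul_of_nonneg_left l2 hη.le
      nlinarith [sq_nonneg (w + (B - B')), sq_nonneg (w - κ * ηc * lE)]
    refine hle.trans ?_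
    rw [integral_five t1 i2 i3 i4 i5, t2, integral_const_mul, integral_const_mul, integral_const_mul, integral_const_mul, g2]
    have := hlap s hsI
    have h6 := mul_le_mul_of_nonneg_left this (sq_nonneg (κ * ηc))
    simp only [hF, hV]
    linarith
  -- Gronwall
  have hF0 : F 0 = 0 := by
    simp [hF, hinit]
  have hVnn : ∀ s, 0 ≤ V s := fun s => integral_nonneg fun x => by positivity
  set φ : ℝ → ℝ := fun s => M ^ 2 * V s + (κ * ηc) ^ 2 * M ^ 2 with hφ
  have hφnn : ∀ s, 0 ≤ φ s := fun s => by
    have := hVnn s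
    simp only [hφ]
    positivity
  have hVi : IntegrableOn V (Icc 0 T) := hVc.integrableOn_Icc
  have hφi : IntegrableOn φ (Icc 0 T) :=
    ((continuousOn_const.mul hVc).add continuousOn_const).integrableOn_Icc
  have hsub : Icc 0 t ⊆ Icc 0 T := Icc_subset_Icc_right ht.2
  have hgr := intervalIntegral.sub_le_integral_of_hasDeriv_right_of_le
    (g := fun s => Real.exp (-2 * s) * F s)
    (g' := fun s => (Real.exp (-2 * s) * (-2)) * F s + Real.exp (-2 * s) *
      ∫ x in channel, 2 * (θ s x - θE s x) * R s x) (φ := φ) ht.1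
    (ContinuousOn.mul (by fun_prop) (hFc.mono hsub))
    (fun s hs => by
      have hs' : s ∈ Ioo 0 T := ⟨hs.1, hs.2.trans_le ht.2⟩
      have he : HasDerivAt (fun r : ℝ => Real.exp (-2 * r)) (Real.exp (-2 * s) * (-2)) s := by
        have := ((hasDerivAt_id s).const_mul (-2 : ℝ)).exp
        simpa using this
      exact (he.mul (hF' s hs').2).hasDerivWithinAt)
    (hφi.mono_set hsub)
    (fun s hs => by
      have hs' : s ∈ Ioo 0 T := ⟨hs.1, hs.2.trans_le ht.2⟩
      have h1 := hen s hs'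
      have h2 : Real.exp (-2 * s) ≤ 1 := by
        rw [Real.exp_le_one_iff]; linarith [hs.1]
      have h3 := Real.exp_pos (-2 * s)
      have h4 := hφnn s
      have h5 : (∫ x in channel, 2 * (θ s x - θE s x) * R s x) ≤ 2 * F s + φ s := by
        simp only [hφ]; linarith
      have h6 := mul_le_mul_of_nonneg_left h5 h3.le
      have h7 := mul_le_mul_of_nonneg_right h2 h4
      linarith)
  simp only [hF0, mul_zero, sub_zero] at hgr
  have hint : (∫ s in (0 : ℝ)..t, φ s) ≤ ∫ s in Icc 0 T, φ s := by
    rw [intervalIntegral.integral_of_le ht.1]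
    exact setIntegral_mono_set hφi (Filter.Eventually.of_forall hφnn)
      (Ioc_subset_Icc_self.trans hsub).eventuallyLE
  have hint2 : (∫ s in Icc 0 T, φ s) = M ^ 2 * (∫ s in Icc 0 T, V s)
      + (κ * ηc) ^ 2 * M ^ 2 * T := by
    simp only [hφ]
    rw [integral_add (hVi.const_mul _) continuousOn_const.integrableOn_Icc, integral_const_mul]
    simp [hT.le]
    ring
  have hIV : 0 ≤ ∫ s in Icc 0 T, V s := integral_nonneg hVnn
  set I := ∫ s in Icc 0 T, V s with hI
  set A := M ^ 2 + ηc ^ 2 * M ^ 2 + 2 with hA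
  have hA2 : 2 ≤ A := by
    have : 0 ≤ M ^ 2 + ηc ^ 2 * M ^ 2 := by positivity
    linarith
  have hfin : Real.exp (-2 * t) * F t ≤ A * (I + κ ^ 2 * T) := by
    refine (hgr.trans hint).trans ?_
    rw [hint2]
    have q1 : 0 ≤ (ηc ^ 2 * M ^ 2 + 2) * I := by positivity
    have q2 : 0 ≤ (M ^ 2 + 2) * (κ ^ 2 * T) := by positivity
    simp only [hA]
    nlinarith
  have hexpt : Real.exp (2 * t) ≤ Real.exp (A * T) := by
    apply Real.exp_le_exp.2
    nlinarith [ht.1, ht.2]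
  have hX : 0 ≤ A * (I + κ ^ 2 * T) := by positivity
  have : F t = Real.exp (2 * t) * (Real.exp (-2 * t) * F t) := by
    rw [← mul_assoc, ← Real.exp_add]
    simp
  calc F t = Real.exp (2 * t) * (Real.exp (-2 * t) * F t) := this
    _ ≤ Real.exp (2 * t) * (A * (I + κ ^ 2 * T)) := by gcongr
    _ ≤ Real.exp (A * T) * (A * (I + κ ^ 2 * T)) := by gcongr
    _ = A * Real.exp (A * T) * (I + κ ^ 2 * T) := by ring
end
end
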